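/- Let p and q be positive integers and let π be a partition of [p+q] with exactly one (p,q)-connecting block B₀; write B₀' = B₀∩{1,...,p} and B₀'' = B₀∩{p+1,...,p+q}. If π ∈ NC_ann(p,q), then every permutation τ ∈ S([p+q]) which is standard in (p,q)-annular sense and whose partition into orbits equals π belongs to S_ann-nc(p,q); consequently, there are exactly card(B₀')·card(B₀'') permutations τ ∈ S_ann-nc(p,q) whose partition into orbits equals π. -/

import Mathlib

/-- The permutation induced by `f` on the subset `B`: an element `b` is sent to the first
element of the sequence `f b, f (f b), f (f (f b)), ...` that lies in `B`
(and is left fixed if no iterate ever returns to `B`). -/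
noncomputable def induced {α : Type*} (f : α → α) (B : Set α) (b : α) : α := by
  classical
  exact if h : ∃ k, 0 < k ∧ f^[k] b ∈ B then f^[Nat.find h] b else b

/-- `A` is an orbit of the permutation `τ`. -/
def IsOrbit {α : Type*} (τ : Equiv.Perm α) (A : Set α) : Prop :=
  ∃ a, A = {b | τ.SameCycle a b}

/-- The number of orbits of `τ` (fixed points count as orbits). -/
noncomputable def numOrbits {α : Type*} (τ : Equiv.Perm α) : ℕ :=
  Set.ncard {A : Set α | IsOrbit τ A}

/-- `induced f S` acts on `a, b, c` as the 3-cycle `(a, b, c)`. -/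
def MapsCyc3 {α : Type*} (f : α → α) (S : Set α) (a b c : α) : Prop :=
  induced f S a = b ∧ induced f S b = c ∧ induced f S c = a

/-- `induced f S` acts on `a, b, c, d` as the 4-cycle `(a, b, c, d)`. -/
def MapsCyc4 {α : Type*} (f : α → α) (S : Set α) (a b c d : α) : Prop :=
  induced f S a = b ∧ induced f S b = c ∧ induced f S c = d ∧ induced f S d = a

/-- `induced f S` acts on `a, b, c, d` as the product of transpositions `(a, c)(b, d)`. -/
def MapsSwap2 {α : Type*} (f : α → α) (S : Set α) (a b c d : α) : Prop :=
  induced f S a = c ∧ induced f S c = a ∧ induced f S b = d ∧ induced f S d = b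

/-- `induced f S` acts on `x, y` as the transposition `(x, y)`. -/
def MapsSwap {α : Type*} (f : α → α) (S : Set α) (x y : α) : Prop :=
  induced f S x = y ∧ induced f S y = x

/-- `σ` is standard with respect to the "forward cycle" `γ₀`, i.e. `σ∣B = γ₀∣B` for
every orbit `B` of `σ`. -/
def DiscStandardRel {n : ℕ} (γ₀ σ : Equiv.Perm (Fin n)) : Prop :=
  ∀ A : Set (Fin n), IsOrbit σ A → ∀ b ∈ A, induced (⇑σ) A b = induced (⇑γ₀) A b

/-- The orbit partition of `σ` has no crossing: there are no `a < b < c < d` with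
`a, c` in one orbit and `b, d` in a different orbit. -/
def OrbitsNoCrossing {n : ℕ} (σ : Equiv.Perm (Fin n)) : Prop :=
  ¬ ∃ a b c d : Fin n, a < b ∧ b < c ∧ c < d ∧
      σ.SameCycle a c ∧ σ.SameCycle b d ∧ ¬ σ.SameCycle a b

/-- Disc non-crossing relative to a given forward cycle `γ₀`. -/
def DiscNCRel {n : ℕ} (γ₀ σ : Equiv.Perm (Fin n)) : Prop :=
  DiscStandardRel γ₀ σ ∧ OrbitsNoCrossing σ

/-- The set `S_disc-nc(n)` of disc non-crossing permutations of `[n]`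
(here `[n] = {1, …, n}` is modelled by `Fin n`, and the forward cycle
`γ₀ = (1, 2, …, n)` is `finRotate n`). -/
def DiscNC {n : ℕ} (σ : Equiv.Perm (Fin n)) : Prop :=
  DiscNCRel (finRotate n) σ

/-- The external points `{1, …, p}` (0-indexed: values `< p`). -/
def extSet (p q : ℕ) : Set (Fin (p + q)) := {i | (i : ℕ) < p}

/-- The internal points `{p+1, …, p+q}` (0-indexed: values `≥ p`). -/
def intSet (p q : ℕ) : Set (Fin (p + q)) := {i | p ≤ (i : ℕ)}

/-- `γ_ext = (1, 2, …, p)`, the forward cycle on the external points. -/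
def gammaExt (p q : ℕ) : Equiv.Perm (Fin (p + q)) :=
  ((List.finRange (p + q)).take p).formPerm

/-- `γ_int = (p+1, p+2, …, p+q)`, the forward cycle on the internal points. -/
def gammaInt (p q : ℕ) : Equiv.Perm (Fin (p + q)) :=
  ((List.finRange (p + q)).drop p).formPerm

/-- `γ = γ_ext · γ_int`. -/
def gammaAnn (p q : ℕ) : Equiv.Perm (Fin (p + q)) := gammaExt p q * gammaInt p q

/-- `λ_{x,y}`: the permutation fixing `x` and `y` and cycling the remaining points as
`(γ_ext(x), γ_ext²(x), …, γ_ext^{p-1}(x), γ_int(y), γ_int²(y), …, γ_int^{q-1}(y))`. -/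
def lamPerm (p q : ℕ) (x y : Fin (p + q)) : Equiv.Perm (Fin (p + q)) :=
  (((List.range (p - 1)).map fun k => (gammaExt p q ^ (k + 1)) x) ++
    ((List.range (q - 1)).map fun k => (gammaInt p q ^ (k + 1)) y)).formPerm

/-- `τ` is standard in `(p,q)`-annular sense. -/
def AnnStandard (p q : ℕ) (τ : Equiv.Perm (Fin (p + q))) : Prop :=
  (∀ A : Set (Fin (p + q)), IsOrbit τ A →
    (∀ b ∈ A ∩ extSet p q,
        induced (⇑τ) (A ∩ extSet p q) b = induced (⇑(gammaExt p q)) (A ∩ extSet p q) b) ∧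
    (∀ b ∈ A ∩ intSet p q,
        induced (⇑τ) (A ∩ intSet p q) b = induced (⇑(gammaInt p q)) (A ∩ intSet p q) b)) ∧
  (∀ A : Set (Fin (p + q)), IsOrbit τ A →
    (A ∩ extSet p q).Nonempty → (A ∩ intSet p q).Nonempty →
    (∃! a, a ∈ A ∩ extSet p q ∧ τ a ∈ intSet p q) ∧
    (∃! a, a ∈ A ∩ intSet p q ∧ τ a ∈ extSet p q))

/-- The annular crossing pattern (AC-1). -/
def AC1 (p q : ℕ) (τ : Equiv.Perm (Fin (p + q))) : Prop :=
  ∃ a b c d : Fin (p + q), List.Pairwise (· ≠ ·) [a, b, c, d] ∧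
    MapsCyc4 (⇑(gammaAnn p q)) {a, b, c, d} a b c d ∧
    MapsSwap2 (⇑τ) {a, b, c, d} a b c d

/-- The annular crossing pattern (AC-2). -/
def AC2 (p q : ℕ) (τ : Equiv.Perm (Fin (p + q))) : Prop :=
  ∃ a b c x y : Fin (p + q), List.Pairwise (· ≠ ·) [a, b, c, x, y] ∧
    x ∈ extSet p q ∧ y ∈ intSet p q ∧
    MapsCyc3 (⇑(lamPerm p q x y)) {a, b, c} a b c ∧
    MapsCyc3 (⇑τ) {a, b, c, x, y} a c b ∧
    MapsSwap (⇑τ) {a, b, c, x, y} x y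

/-- The annular crossing pattern (AC-3). -/
def AC3 (p q : ℕ) (τ : Equiv.Perm (Fin (p + q))) : Prop :=
  ∃ a b c d x y : Fin (p + q), List.Pairwise (· ≠ ·) [a, b, c, d, x, y] ∧
    x ∈ extSet p q ∧ y ∈ intSet p q ∧
    MapsCyc4 (⇑(lamPerm p q x y)) {a, b, c, d} a b c d ∧
    MapsSwap2 (⇑τ) {a, b, c, d, x, y} a b c d ∧
    MapsSwap (⇑τ) {a, b, c, d, x, y} x y

/-- The set `S_ann-nc(p,q)` of `(p,q)`-annular non-crossing permutations. -/
def AnnNC (p q : ℕ) (τ : Equiv.Perm (Fin (p + q))) : Prop :=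
  AnnStandard p q τ ∧ ¬ AC1 p q τ ∧ ¬ AC2 p q τ ∧ ¬ AC3 p q τ

/-- A `(p,q)`-connecting set: meets both the external and internal points. -/
def ConnectingBlock (p q : ℕ) (B : Set (Fin (p + q))) : Prop :=
  (B ∩ extSet p q).Nonempty ∧ (B ∩ intSet p q).Nonempty

/-- `τ` is `(p,q)`-connected: it has a `(p,q)`-connecting orbit. -/
def AnnConnected (p q : ℕ) (τ : Equiv.Perm (Fin (p + q))) : Prop :=
  ∃ A : Set (Fin (p + q)), IsOrbit τ A ∧ ConnectingBlock p q A

/-- A family of blocks has no crossing: no `a < b < c < d` with `a, c` in one block and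
`b, d` in a different block. -/
def NoCrossing {n : ℕ} (ρ : Set (Set (Fin n))) : Prop :=
  ¬ ∃ (a b c d : Fin n) (B C : Set (Fin n)), B ∈ ρ ∧ C ∈ ρ ∧ B ≠ C ∧
      a < b ∧ b < c ∧ c < d ∧ a ∈ B ∧ c ∈ B ∧ b ∈ C ∧ d ∈ C

/-!
Let `S` be the set of external points. A standard permutation `τ` with a single connecting orbit
leaves `S` at one point `u` and re-enters it after one point `v`, so composing `τ` with the
transposition `(u v)` gives its first-return map `G` to the two circles. Standardness identifies
`G` with the first-return maps of `γ` to the sets `B ∩ S` and `B \ S`, which depend only on the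
orbit partition. Conversely, `G * (u v)` is standard with the given orbits for every choice of `u`
and `v` in the connecting block on the two circles; this counts the standard permutations.

Being non-crossing is a property of the orbit partition: the orbit of `a` (and of `b`) in (AC-2) or
(AC-3) is not the connecting one, so it lies on a single circle. This rules out (AC-2) and reduces
(AC-3) to (AC-1), which can be phrased in terms of orbits alone.
-/

section FirstReturn

variable {α : Type*} {f g : α → α} {C D T : Set α} {b c e : α}

/-- `FirstReturn f C b c` says that `c` is the first of `f b, f (f b), …` to lie in `C`: the graph
of `induced f C` at the points that do return to `C`, in a form that admits rule induction. -/
inductive FirstReturn (f : α → α) (C : Set α) : α → α → Prop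
  | apply {b : α} (hb : f b ∈ C) : FirstReturn f C b (f b)
  | step {b c : α} (hb : f b ∉ C) (h : FirstReturn f C (f b) c) : FirstReturn f C b c

namespace FirstReturn

theorem mem (h : FirstReturn f C b c) : c ∈ C := by
  induction h with
  | apply hb => exact hb
  | step _ _ ih => exact ih

theorem exists_iterate_eq (h : FirstReturn f C b c) :
    ∃ k, 0 < k ∧ f^[k] b = c ∧ ∀ j < k, ¬(0 < j ∧ f^[j] b ∈ C) := by
  induction h with
  | apply => exact ⟨1, one_pos, rfl, fun j hj hj' => by omega⟩
  | @step b c hb _ ih =>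
    obtain ⟨k, -, hkc, hmin⟩ := ih
    refine ⟨k + 1, k.succ_pos, hkc, ?_⟩
    rintro (_ | _ | j) hj ⟨hj0, hjC⟩
    · exact hj0.false
    · exact hb hjC
    · exact hmin (j + 1) (by omega) ⟨j.succ_pos, hjC⟩

theorem induced_eq (h : FirstReturn f C b c) : induced f C b = c := by
  classical
  obtain ⟨k, hk, rfl, hmin⟩ := h.exists_iterate_eq
  have hex : ∃ k, 0 < k ∧ f^[k] b ∈ C := ⟨k, hk, h.mem⟩
  rw [induced, dif_pos hex, (Nat.find_eq_iff hex).2 ⟨⟨hk, h.mem⟩, hmin⟩]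

theorem exists_of_iterate_mem {n : ℕ} (h : f^[n + 1] b ∈ C) : ∃ c, FirstReturn f C b c := by
  induction n generalizing b with
  | zero => exact ⟨_, .apply h⟩
  | succ n ih =>
    by_cases hb : f b ∈ C
    · exact ⟨_, .apply hb⟩
    · exact (ih h).imp fun _ => .step hb

theorem exists_of_superset (h : FirstReturn f T b c) (hT : T ⊆ C) :
    ∃ c', FirstReturn f C b c' := by
  obtain ⟨k, hk, rfl, -⟩ := h.exists_iterate_eq
  obtain ⟨k, rfl⟩ := Nat.exists_eq_add_one.2 hk
  exact exists_of_iterate_mem (hT h.mem)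

theorem exists_apply_eq (h : FirstReturn f C b c) : ∃ w, f w = c ∧ (w = b ∨ w ∉ C) := by
  induction h with
  | apply => exact ⟨_, rfl, .inl rfl⟩
  | step hb _ ih =>
    obtain ⟨w, hw, rfl | hwC⟩ := ih
    exacts [⟨_, hw, .inr hb⟩, ⟨w, hw, .inr hwC⟩]

theorem subset (h : FirstReturn f C b c) (hT : T ⊆ C) (hc : c ∈ T) : FirstReturn f T b c := by
  induction h with
  | apply => exact .apply hc
  | step hb _ ih => exact .step (fun hbT => hb (hT hbT)) (ih hc)

theorem congr (h : FirstReturn f C b c) (hD : Set.MapsTo f D D) (hfg : Set.EqOn f g D)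
    (hb : b ∈ D) : FirstReturn g C b c := by
  induction h with
  | apply hC =>
    rw [hfg hb] at hC ⊢
    exact .apply hC
  | step hC _ ih =>
    have hgC := ih (hD hb)
    rw [hfg hb] at hC hgC
    exact .step hC hgC

theorem induced_of_subset (h : FirstReturn f T b c) (hT : T ⊆ C) :
    FirstReturn (induced f C) T b c := by
  induction h with
  | apply hb =>
    have hfb := (FirstReturn.apply (hT hb)).induced_eq
    rw [← hfb] at hb ⊢
    exact .apply hb
  | @step b c hb h ih =>
    by_cases hbC : f b ∈ C
    · have hfb := (FirstReturn.apply hbC).induced_eq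
      rw [← hfb] at hb ih
      exact .step hb ih
    · obtain ⟨c', hc'⟩ := h.exists_of_superset hT
      have hfb : induced f C (f b) = induced f C b :=
        hc'.induced_eq.trans (hc'.step hbC).induced_eq.symm
      cases ih with
      | apply hT => exact hfb ▸ .apply (hfb ▸ hT)
      | step hT ih => exact .step (hfb ▸ hT) (hfb ▸ ih)

theorem of_unique_exit (h : FirstReturn f T b c) (he : ∀ z ∈ D, f z ∉ D → z = e) (hb : b ∈ D)
    (hc : c ∉ D) : FirstReturn f T e c := by
  induction h with
  | apply hT => exact he _ hb hc ▸ .apply hT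
  | @step b c hT h ih =>
    by_cases hbD : f b ∈ D
    · exact ih hbD hc
    · exact he b hb hbD ▸ .step hT h

end FirstReturn

theorem induced_of_apply_mem (hb : f b ∈ C) : induced f C b = f b :=
  (FirstReturn.apply hb).induced_eq

theorem mapsSwap2_iff_mapsSwap {a d : α} :
    MapsSwap2 f C a b c d ↔ MapsSwap f C a c ∧ MapsSwap f C b d :=
  and_assoc.symm

end FirstReturn

section Perm

variable {α : Type*} [Finite α] {τ σ : Equiv.Perm α} {C D T : Set α} {a b c : α}

theorem sameCycle_induction {P : α → Prop} (ha : P a) (hP : ∀ z, P z → P (τ z))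
    (h : τ.SameCycle a b) : P b := by
  obtain ⟨n, rfl⟩ := h.exists_nat_pow_eq
  induction n with
  | zero => exact ha
  | succ n ih =>
    rw [pow_succ', Equiv.Perm.mul_apply]
    exact hP _ (ih ⟨n, rfl⟩)

theorem sameCycle_of_sameCycle_apply (h : ∀ z, σ.SameCycle z (τ z)) (hab : τ.SameCycle a b) :
    σ.SameCycle a b :=
  sameCycle_induction (P := σ.SameCycle a) (.refl σ a) (fun z hz => hz.trans (h z)) hab

theorem sameCycle_congr (hD : Set.MapsTo τ D D) (hτσ : Set.EqOn τ σ D) (ha : a ∈ D)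
    (hab : τ.SameCycle a b) : σ.SameCycle a b :=
  (sameCycle_induction (P := fun z => z ∈ D ∧ σ.SameCycle a z) ⟨ha, .refl σ a⟩
    (fun _ hz => ⟨hD hz.1, hτσ hz.1 ▸ hz.2.apply_right⟩) hab).2

theorem firstReturn_induced (hc : c ∈ C) (h : τ.SameCycle b c) :
    FirstReturn τ C b (induced τ C b) := by
  obtain ⟨n, hn, -, rfl⟩ := h.exists_pow_eq''
  obtain ⟨n, rfl⟩ := Nat.exists_eq_add_one.2 hn
  rw [← Equiv.Perm.iterate_eq_pow] at hc
  obtain ⟨c, hc⟩ := FirstReturn.exists_of_iterate_mem hc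
  exact hc.induced_eq.symm ▸ hc

theorem firstReturn_induced_self (hb : b ∈ C) : FirstReturn τ C b (induced τ C b) :=
  firstReturn_induced hb (.refl τ b)

theorem induced_mem (hb : b ∈ C) : induced τ C b ∈ C :=
  (firstReturn_induced_self hb).mem

theorem induced_of_apply_notMem (hc : c ∈ C) (h : τ.SameCycle b c) (hb : τ b ∉ C) :
    induced τ C b = induced τ C (τ b) :=
  ((firstReturn_induced hc h.apply_left).step hb).induced_eq

theorem sameCycle_induced (hb : b ∈ C) : τ.SameCycle b (induced τ C b) := by
  obtain ⟨k, -, hk, -⟩ := (firstReturn_induced_self (τ := τ) hb).exists_iterate_eq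
  rw [← hk, Equiv.Perm.iterate_eq_pow]
  exact ⟨k, rfl⟩

theorem induced_induced (hT : T ⊆ C) (hb : b ∈ T) : induced (induced τ C) T b = induced τ T b :=
  ((firstReturn_induced_self hb).induced_of_subset hT).induced_eq

theorem induced_eq_of_subset (hT : T ⊆ C) (hb : b ∈ C) (h : induced τ C b ∈ T) :
    induced τ T b = induced τ C b :=
  ((firstReturn_induced_self hb).subset hT h).induced_eq

theorem induced_congr {g : α → α} (hD : Set.MapsTo τ D D) (hg : Set.EqOn τ g D) (hT : T ⊆ D)
    (hb : b ∈ T) : induced τ T b = induced g T b :=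
  ((firstReturn_induced_self hb).congr hD hg (hT hb)).induced_eq.symm

theorem mem_of_sameCycle_of_mapsTo_induced (hD : Set.MapsTo (induced τ C) D D) (haD : a ∈ D)
    (ha : a ∈ C) (hb : b ∈ C) (h : τ.SameCycle a b) : b ∈ D := by
  -- Points of the orbit outside `C` are controlled through their first return to `C`.
  refine (sameCycle_induction
    (P := fun z => τ.SameCycle a z ∧ (z ∈ C → z ∈ D) ∧ induced τ C z ∈ D)
    ⟨.refl τ a, fun _ => haD, hD haD⟩ ?_ h).2.1 hb
  rintro z ⟨haz, -, hz⟩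
  by_cases hzC : τ z ∈ C
  · rw [induced_of_apply_mem hzC] at hz
    exact ⟨haz.apply_right, fun _ => hz, hD hz⟩
  · rw [induced_of_apply_notMem ha haz.symm hzC] at hz
    exact ⟨haz.apply_right, fun hzC' => absurd hzC' hzC, hz⟩

theorem sameCycle_of_eqOn_induced (hσ : Set.EqOn σ (induced τ C) C) (ha : a ∈ C) (hb : b ∈ C)
    (h : τ.SameCycle a b) : σ.SameCycle a b := by
  suffices b ∈ {z | z ∈ C ∧ σ.SameCycle a z} from this.2
  refine mem_of_sameCycle_of_mapsTo_induced ?_ ⟨ha, .refl σ a⟩ ha hb h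
  rintro z ⟨hz, haz⟩
  exact ⟨induced_mem hz, hσ hz ▸ haz.apply_right⟩

theorem mapsSwap_iff (ha : a ∈ C) (hc : c ∈ C) (hac : a ≠ c) :
    MapsSwap τ C a c ↔ τ.SameCycle a c ∧ ∀ z ∈ C, τ.SameCycle a z → z = a ∨ z = c := by
  constructor
  · rintro ⟨h₁, h₂⟩
    refine ⟨h₁ ▸ sameCycle_induced ha, fun z hz haz => ?_⟩
    refine mem_of_sameCycle_of_mapsTo_induced (D := {a, c}) ?_ (.inl rfl) ha hz haz
    rintro _ (rfl | rfl)
    exacts [.inr h₁, .inl h₂]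
  · rintro ⟨h, hC⟩
    have induced_ne {x y : α} (hx : x ∈ C) (hy : y ∈ C) (hxy : x ≠ y) (h : τ.SameCycle x y) :
        induced τ C x ≠ x := fun hfix =>
      hxy.symm (mem_of_sameCycle_of_mapsTo_induced (D := {x}) (by rintro _ rfl; exact hfix) rfl
        hx hy h)
    exact ⟨(hC _ (induced_mem ha) (sameCycle_induced ha)).resolve_left
        (induced_ne ha hc hac h),
      (hC _ (induced_mem hc) (h.trans (sameCycle_induced hc))).resolve_right
        (induced_ne hc ha hac.symm h.symm)⟩

theorem mapsSwap2_iff {d : α} (hne : [a, b, c, d].Pairwise (· ≠ ·)) :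
    MapsSwap2 τ {a, b, c, d} a b c d ↔
      τ.SameCycle a c ∧ τ.SameCycle b d ∧ ¬τ.SameCycle a b := by
  have hac : a ≠ c := by grind
  have hbd : b ≠ d := by grind
  rw [mapsSwap2_iff_mapsSwap, mapsSwap_iff (by simp) (by simp) hac,
    mapsSwap_iff (by simp) (by simp) hbd]
  constructor
  · rintro ⟨⟨h₁, ha⟩, h₂, -⟩
    exact ⟨h₁, h₂, fun hab => by grind⟩
  · rintro ⟨h₁, h₂, hab⟩
    have had : ¬τ.SameCycle a d := fun h => hab (h.trans h₂.symm)
    have hbc : ¬τ.SameCycle b c := fun h => hab (h₁.trans h.symm)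
    have hba : ¬τ.SameCycle b a := fun h => hab h.symm
    exact ⟨⟨h₁, by grind⟩, h₂, by grind⟩

end Perm

section FormPerm

variable {α : Type*} [DecidableEq α] {l l' : List α} {T : Set α} {a b c x y z : α}

theorem mapsTo_formPerm (l : List α) : Set.MapsTo l.formPerm {z | z ∈ l} {z | z ∈ l} :=
  fun _ => List.formPerm_apply_mem_of_mem

theorem formPerm_eqOn_mul_left (h : l.Disjoint l') :
    Set.EqOn l.formPerm (l.formPerm * l'.formPerm) {z | z ∈ l} := fun z hz => by
  rw [Equiv.Perm.mul_apply, List.formPerm_apply_of_notMem (h hz)]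

theorem formPerm_eqOn_mul_right (h : l.Disjoint l') :
    Set.EqOn l'.formPerm (l.formPerm * l'.formPerm) {z | z ∈ l'} := fun z hz => by
  rw [Equiv.Perm.mul_apply, List.formPerm_apply_of_notMem (x := l'.formPerm z)]
  exact fun hl => h hl (List.formPerm_apply_mem_of_mem hz)

theorem eq_getLast_of_formPerm_append_notMem (hl : (l ++ l').Nodup) (hz : z ∈ l)
    (h : (l ++ l').formPerm z ∉ l) : z = l.getLast (List.ne_nil_of_mem hz) := by
  obtain ⟨i, hi, rfl⟩ := List.getElem_of_mem hz
  rcases (Nat.succ_le_of_lt hi).eq_or_lt with hlast | hlt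
  · simp [List.getLast_eq_getElem, ← hlast]
  · have hnext := List.formPerm_apply_lt_getElem _ hl i (by simp; omega)
    rw [List.getElem_append_left hi, List.getElem_append_left hlt] at hnext
    exact absurd (hnext ▸ List.getElem_mem hlt) h

/-- The cyclic list `l` cut open at `x`: its points from the successor of `x` round to the
predecessor of `x`. The cycle `λ_{x,y}` is made of two such lists. -/
def cutAt (l : List α) (x : α) : List α :=
  (List.range (l.length - 1)).map fun k => (l.formPerm ^ (k + 1)) x

theorem isRotated_cons_cutAt (hl : l.Nodup) (hx : x ∈ l) : l ~r x :: cutAt l x := by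
  obtain ⟨i, hi, rfl⟩ := List.getElem_of_mem hx
  refine ⟨i, List.ext_getElem ?_ fun j hj _ => ?_⟩
  · simp [cutAt]; omega
  · rw [List.getElem_rotate, add_comm, ← List.formPerm_pow_apply_getElem l hl j i hi]
    cases j <;> simp [cutAt]

theorem mem_cutAt (hl : l.Nodup) (hx : x ∈ l) : z ∈ cutAt l x ↔ z ∈ l ∧ z ≠ x := by
  have hrot := isRotated_cons_cutAt hl hx
  have hnotMem := (List.nodup_cons.1 (hrot.nodup_iff.1 hl)).1
  rw [hrot.mem_iff, List.mem_cons]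
  grind

theorem nodup_cutAt_append (h : (l ++ l').Nodup) (hx : x ∈ l) (hy : y ∈ l') :
    (cutAt l x ++ cutAt l' y).Nodup := by
  obtain ⟨hl, hl', hdisj⟩ := List.nodup_append'.1 h
  refine List.nodup_append'.2 ⟨((isRotated_cons_cutAt hl hx).nodup_iff.1 hl).of_cons,
    ((isRotated_cons_cutAt hl' hy).nodup_iff.1 hl').of_cons, fun z hz hz' => ?_⟩
  exact hdisj ((mem_cutAt hl hx).1 hz).1 ((mem_cutAt hl' hy).1 hz').1

theorem induced_formPerm_cons_self (hl : (x :: l).Nodup) (hb : b ∈ l) :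
    induced (x :: l).formPerm {z | z ∈ l} b = l.formPerm b := by
  obtain ⟨hx, -⟩ := List.nodup_cons.1 hl
  obtain _ | ⟨y, l⟩ := l
  · simp at hb
  have hbl : (y :: l).formPerm b ∈ y :: l := List.formPerm_apply_mem_of_mem hb
  have hxf : (y :: l).formPerm x = x := List.formPerm_apply_of_notMem hx
  by_cases hby : (y :: l).formPerm b = y
  · have hfb : (x :: y :: l).formPerm b = x := by simp [hby]
    have hfx : (x :: y :: l).formPerm x = y := by simp [hxf]
    have hreturn : FirstReturn (x :: y :: l).formPerm {z | z ∈ y :: l} b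
        ((x :: y :: l).formPerm x) := by
      refine .step (by rwa [hfb]) ?_
      rw [hfb]
      exact .apply (by rw [hfx]; exact List.mem_cons_self)
    rw [hreturn.induced_eq, hfx, hby]
  · have hfb : (x :: y :: l).formPerm b = (y :: l).formPerm b := by
      rw [List.formPerm_cons_cons, Equiv.Perm.mul_apply,
        Equiv.swap_apply_of_ne_of_ne (ne_of_mem_of_not_mem hbl hx) hby]
    rw [induced_of_apply_mem (by rwa [hfb]), hfb]

variable [Finite α]

theorem induced_formPerm_append_eq_of_notMem (hl : (l ++ l').Nodup) (ha : a ∈ T) (hc : c ∈ T)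
    (hal : a ∈ l) (hcl : c ∈ l) (ha' : induced (l ++ l').formPerm T a ∉ l)
    (hc' : induced (l ++ l').formPerm T c ∉ l) :
    induced (l ++ l').formPerm T a = induced (l ++ l').formPerm T c := by
  have firstReturn_getLast {b : α} (hb : b ∈ T) (hbl : b ∈ l)
      (hb' : induced (l ++ l').formPerm T b ∉ l) :
      FirstReturn (l ++ l').formPerm T (l.getLast (List.ne_nil_of_mem hbl))
        (induced (l ++ l').formPerm T b) :=
    (firstReturn_induced_self hb).of_unique_exit (D := {z | z ∈ l})
      (fun z hz => eq_getLast_of_formPerm_append_notMem hl hz) hbl hb'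
  exact (firstReturn_getLast ha hal ha').induced_eq.symm.trans
    (firstReturn_getLast hc hcl hc').induced_eq

theorem induced_formPerm_cons (hl : (x :: l).Nodup) (hT : T ⊆ {z | z ∈ l}) (hb : b ∈ T) :
    induced (x :: l).formPerm T b = induced l.formPerm T b := by
  rw [← induced_induced hT hb]
  exact (induced_congr (g := induced (x :: l).formPerm {z | z ∈ l}) (mapsTo_formPerm l)
    (fun _ hz => (induced_formPerm_cons_self hl hz).symm) hT hb).symm

theorem induced_formPerm_append_right (hl : (l' ++ l).Nodup) (hT : T ⊆ {z | z ∈ l})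
    (hb : b ∈ T) : induced (l' ++ l).formPerm T b = induced l.formPerm T b := by
  induction l' with
  | nil => rfl
  | cons x l' ih =>
    rw [List.cons_append] at hl ⊢
    rw [induced_formPerm_cons hl (hT.trans fun z hz => List.mem_append_right _ hz) hb,
      ih hl.of_cons]

theorem induced_formPerm_append_cutAt (hl' : (l' ++ cutAt l x).Nodup) (hl : l.Nodup) (hx : x ∈ l)
    (hT : T ⊆ {z | z ∈ l}) (hxT : x ∉ T) (hb : b ∈ T) :
    induced (l' ++ cutAt l x).formPerm T b = induced l.formPerm T b := by
  have hrot := isRotated_cons_cutAt hl hx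
  have hT' : T ⊆ {z | z ∈ cutAt l x} := fun z hz =>
    (mem_cutAt hl hx).2 ⟨hT hz, ne_of_mem_of_not_mem hz hxT⟩
  rw [induced_formPerm_append_right hl' hT' hb, List.formPerm_eq_of_isRotated hl hrot,
    induced_formPerm_cons (hrot.nodup_iff.1 hl) hT' hb]

theorem induced_formPerm_cutAt_append (hl' : (cutAt l x ++ l').Nodup) (hl : l.Nodup) (hx : x ∈ l)
    (hT : T ⊆ {z | z ∈ l}) (hxT : x ∉ T) (hb : b ∈ T) :
    induced (cutAt l x ++ l').formPerm T b = induced l.formPerm T b := by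
  rw [List.formPerm_eq_of_isRotated hl' List.isRotated_append,
    induced_formPerm_append_cutAt (List.nodup_append_comm.1 hl') hl hx hT hxT hb]

theorem induced_formPerm_mul_left (h : l.Disjoint l') (hT : T ⊆ {z | z ∈ l}) (hb : b ∈ T) :
    induced (l.formPerm * l'.formPerm) T b = induced l.formPerm T b :=
  (induced_congr (mapsTo_formPerm l) (formPerm_eqOn_mul_left h) hT hb).symm

theorem induced_formPerm_mul_right (h : l.Disjoint l') (hT : T ⊆ {z | z ∈ l'}) (hb : b ∈ T) :
    induced (l.formPerm * l'.formPerm) T b = induced l'.formPerm T b :=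
  (induced_congr (mapsTo_formPerm l') (formPerm_eqOn_mul_right h) hT hb).symm

theorem sameCycle_formPerm_mul_left (h : l.Disjoint l') (hl : l.Nodup) (ha : a ∈ l)
    (hb : b ∈ l) : (l.formPerm * l'.formPerm).SameCycle a b :=
  sameCycle_congr (mapsTo_formPerm l) (formPerm_eqOn_mul_left h) ha
    (hl.isCycleOn_formPerm.2 ha hb)

theorem sameCycle_formPerm_mul_right (h : l.Disjoint l') (hl : l'.Nodup) (ha : a ∈ l')
    (hb : b ∈ l') : (l.formPerm * l'.formPerm).SameCycle a b :=
  sameCycle_congr (mapsTo_formPerm l') (formPerm_eqOn_mul_right h) ha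
    (hl.isCycleOn_formPerm.2 ha hb)

end FormPerm

section Orbits

variable {α : Type*} {τ σ : Equiv.Perm α}

theorem setOf_isOrbit_eq_classes :
    {A | IsOrbit τ A} = (Equiv.Perm.SameCycle.setoid τ).classes := by
  ext A
  refine exists_congr fun a => ?_
  rw [show {b | τ.SameCycle a b} = {b | Equiv.Perm.SameCycle.setoid τ b a} from
    Set.ext fun b => Equiv.Perm.sameCycle_comm]

theorem setOf_isOrbit_inj :
    {A | IsOrbit τ A} = {A | IsOrbit σ A} ↔
      Equiv.Perm.SameCycle.setoid τ = Equiv.Perm.SameCycle.setoid σ := by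
  rw [setOf_isOrbit_eq_classes, setOf_isOrbit_eq_classes, Setoid.classes_inj]

end Orbits

section Sides

variable {α : Type*} {S T : Set α} {r : Setoid α} {a b u v w z : α}

/-- The one of `S` and `Sᶜ` that contains `b`. When `S` is the set of external points, this is the
circle of the annulus on which `b` lies. -/
def side (S : Set α) (b : α) : Set α := {z | z ∈ S ↔ b ∈ S}

/-- The part of the `r`-class of `b` that lies on the same side of `S` as `b`; these are the sets
`A ∩ {1, …, p}` and `A ∩ {p + 1, …, p + q}` of the paper, for `A` a block. -/
def cell (r : Setoid α) (S : Set α) (b : α) : Set α := {z | r b z} ∩ side S b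

/-- No class of `r`, other than possibly that of `w`, meets both `S` and `Sᶜ`. -/
def OnlyCrossingClass (r : Setoid α) (S : Set α) (w : α) : Prop :=
  ∀ ⦃a b⦄, r a b → b ∉ side S a → r w a

/-- The permutation `τ` passes from one side of `S` to the other exactly at `u ∈ S` and
`v ∉ S`. -/
structure IsCrossingPair (τ : Equiv.Perm α) (S : Set α) (u v : α) : Prop where
  left_mem : u ∈ S
  right_notMem : v ∉ S
  apply_notMem_side_iff : ∀ z, τ z ∉ side S z ↔ z = u ∨ z = v

/-- On every side of `S`, each orbit of `τ` is traversed in the order of `γ`: the first half of the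
definition of a standard permutation. -/
def IsSideStandard (γ : Equiv.Perm α) (S : Set α) (τ : Equiv.Perm α) : Prop :=
  ∀ b, induced τ (side S b) b = induced γ (cell (Equiv.Perm.SameCycle.setoid τ) S b) b

/-- The permutation `τ` is side-standard and its orbit through `w` passes from `S` to `Sᶜ` and back
exactly once: annular standardness, for a permutation whose only orbit meeting both sides is that of
`w`. -/
def IsStandardAt (γ : Equiv.Perm α) (S : Set α) (w : α) (τ : Equiv.Perm α) : Prop :=
  IsSideStandard γ S τ ∧
    ∃ u v, τ.SameCycle w u ∧ τ.SameCycle w v ∧ IsCrossingPair τ S u v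

theorem mem_side_self : b ∈ side S b := Iff.rfl

theorem side_eq_of_mem (hb : b ∈ S) : side S b = S :=
  Set.ext fun _ => iff_true_right hb

theorem side_eq_compl_of_notMem (hb : b ∉ S) : side S b = Sᶜ :=
  Set.ext fun _ => iff_false_right hb

theorem notMem_side_iff (hb : b ∈ S) : z ∉ side S b ↔ z ∉ S := by
  rw [side_eq_of_mem hb]

theorem notMem_side_iff_mem (hb : b ∉ S) : z ∉ side S b ↔ z ∈ S := by
  rw [side_eq_compl_of_notMem hb, Set.notMem_compl_iff]

theorem OnlyCrossingClass.mem_side (hr : OnlyCrossingClass r S w) (huv : r u v)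
    (hside : v ∉ side S u) (hua : ¬r u a) (hab : r a b) : b ∈ side S a :=
  not_not.1 fun hb => hua (r.trans (r.symm (hr huv hside)) (hr hab hb))

theorem mem_cell_self : b ∈ cell r S b := ⟨r.refl b, mem_side_self⟩

theorem cell_eq_of_mem (h : b ∈ cell r S a) : cell r S b = cell r S a := by
  ext z
  exact and_congr ⟨r.trans h.1, r.trans (r.symm h.1)⟩ (iff_congr Iff.rfl h.2)

theorem cell_eq_inter (hb : b ∈ S) (h : r a b) : cell r S b = {z | r a z} ∩ S := by
  rw [cell, side_eq_of_mem hb]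
  exact congrArg (· ∩ S) (Set.ext fun z => ⟨r.trans h, r.trans (r.symm h)⟩)

theorem cell_eq_inter_compl (hb : b ∉ S) (h : r a b) : cell r S b = {z | r a z} ∩ Sᶜ := by
  rw [cell, side_eq_compl_of_notMem hb]
  exact congrArg (· ∩ Sᶜ) (Set.ext fun z => ⟨r.trans h, r.trans (r.symm h)⟩)

theorem injOn_swap [DecidableEq α] :
    Set.InjOn (fun z : α × α => Equiv.swap z.1 z.2) (S ×ˢ Sᶜ) := by
  rintro ⟨u, v⟩ ⟨hu, hv⟩ ⟨u', v'⟩ ⟨hu', -⟩ h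
  have huv : Equiv.swap u' v' u = v := by
    rw [← show Equiv.swap u v = Equiv.swap u' v' from h, Equiv.swap_apply_left]
  rw [Equiv.swap_apply_def] at huv
  grind

variable {γ σ τ G : Equiv.Perm α}

theorem isCrossingPair_mul_swap [DecidableEq α] (hG : ∀ b, G b ∈ side S b) (hu : u ∈ S)
    (hv : v ∉ S) : IsCrossingPair (G * Equiv.swap u v) S u v := by
  refine ⟨hu, hv, fun z => ?_⟩
  have hGu : G u ∈ S ↔ u ∈ S := hG u
  have hGv : G v ∈ S ↔ v ∈ S := hG v
  have hGz : G z ∈ S ↔ z ∈ S := hG z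
  simp only [side, Set.mem_ofPred_eq, Equiv.Perm.mul_apply, Equiv.swap_apply_def]
  grind

theorem rel_mul_swap_apply [DecidableEq α] (hG : ∀ b, r b (G b)) (huv : r u v) :
    r z ((G * Equiv.swap u v) z) := by
  suffices r z (Equiv.swap u v z) from r.trans this (hG _)
  rw [Equiv.swap_apply_def]
  split_ifs with hu hv
  exacts [hu ▸ huv, hv ▸ r.symm huv, r.refl z]

variable [Finite α]

theorem induced_cell_eq_induced_side :
    induced τ (cell (Equiv.Perm.SameCycle.setoid τ) S b) b = induced τ (side S b) b :=
  induced_eq_of_subset Set.inter_subset_right mem_side_self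
    ⟨sameCycle_induced mem_side_self, induced_mem mem_side_self⟩

theorem IsSideStandard.induced_eq (h : IsSideStandard γ S τ)
    (hT : T ⊆ cell (Equiv.Perm.SameCycle.setoid τ) S a) (ha : a ∈ T) :
    induced τ T a = induced γ T a := by
  have hreturn := ((firstReturn_induced_self (τ := τ) ha).induced_of_subset hT).congr
    (fun _ => induced_mem) (g := induced γ (cell (Equiv.Perm.SameCycle.setoid τ) S a))
    (fun z hz => by rw [← cell_eq_of_mem hz, induced_cell_eq_induced_side, h]) (hT ha)
  rw [← hreturn.induced_eq, induced_induced hT ha]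

/-- The orbit of `u` leaves `S` for `v`'s side and comes back right after `v`, so that `τ v` is the
first return of `u` to its side. -/
theorem IsCrossingPair.induced_side [DecidableEq α] (h : IsCrossingPair τ S u v) :
    induced τ (side S b) b = (τ * Equiv.swap u v) b := by
  obtain ⟨hu, hv, hτ⟩ := h
  rw [Equiv.Perm.mul_apply]
  by_cases hb : τ b ∈ side S b
  · obtain ⟨hbu, hbv⟩ := not_or.1 (mt (hτ b).2 (not_not.2 hb))
    rw [induced_of_apply_mem hb, Equiv.swap_apply_of_ne_of_ne hbu hbv]
  · obtain ⟨w, hw, rfl | hwb⟩ :=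
      (firstReturn_induced_self (τ := τ) (mem_side_self (S := S) (b := b))).exists_apply_eq
    · exact absurd (hw ▸ induced_mem mem_side_self) hb
    · have hwb' : τ w ∈ side S b := hw ▸ induced_mem mem_side_self
      have hww : τ w ∉ side S w := fun h => hwb (h.symm.trans hwb')
      rw [← hw]
      obtain rfl | rfl := (hτ b).1 hb <;> obtain rfl | rfl := (hτ w).1 hww
      · exact absurd mem_side_self hwb
      · rw [Equiv.swap_apply_left]
      · rw [Equiv.swap_apply_right]
      · exact absurd mem_side_self hwb

theorem induced_side_mul_swap [DecidableEq α] (hG : ∀ b, G b ∈ side S b) (hu : u ∈ S) (hv : v ∉ S) :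
    induced (G * Equiv.swap u v) (side S b) b = G b := by
  rw [(isCrossingPair_mul_swap hG hu hv).induced_side, mul_assoc, Equiv.swap_mul_self, mul_one]

theorem setoid_mul_swap_eq [DecidableEq α] (hγ : ∀ a b, b ∈ side S a → γ.SameCycle a b)
    (hG : ∀ b, G b = induced γ (cell r S b) b) (hr : OnlyCrossingClass r S w) (hwu : r w u)
    (hwv : r w v) (hu : u ∈ S) (hv : v ∉ S) :
    Equiv.Perm.SameCycle.setoid (G * Equiv.swap u v) = r := by
  have hGcell b : G b ∈ cell r S b := hG b ▸ induced_mem mem_cell_self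
  have sameCycle_apply z : (G * Equiv.swap u v).SameCycle z (G z) :=
    induced_side_mul_swap (fun b => (hGcell b).2) hu hv ▸ sameCycle_induced mem_side_self
  have sameCycle_of_mem_cell {a b} (hb : b ∈ cell r S a) :
      (G * Equiv.swap u v).SameCycle a b :=
    sameCycle_of_sameCycle_apply sameCycle_apply <|
      sameCycle_of_eqOn_induced (fun z hz => cell_eq_of_mem hz ▸ hG z) mem_cell_self hb
        (hγ a b hb.2)
  have sameCycle_swap : (G * Equiv.swap u v).SameCycle u v := by
    have hGv : (G * Equiv.swap u v) u = G v := by simp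
    exact Equiv.Perm.sameCycle_apply_left.1 (hGv ▸ (sameCycle_apply v).symm)
  have sameCycle_of_mem {a} (ha : r w a) : (G * Equiv.swap u v).SameCycle u a := by
    by_cases haS : a ∈ S
    · exact sameCycle_of_mem_cell ⟨r.trans (r.symm hwu) ha, iff_of_true haS hu⟩
    · exact sameCycle_swap.trans
        (sameCycle_of_mem_cell ⟨r.trans (r.symm hwv) ha, iff_of_false haS hv⟩)
  refine Setoid.ext fun a b => ⟨fun hab => ?_, fun hab => ?_⟩
  · exact sameCycle_induction (P := r a) (r.refl a) (fun z hz => r.trans hz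
      (rel_mul_swap_apply (fun b => (hGcell b).1) (r.trans (r.symm hwu) hwv))) hab
  · by_cases hside : b ∈ side S a
    · exact sameCycle_of_mem_cell ⟨hab, hside⟩
    · have hwa := hr hab hside
      exact (sameCycle_of_mem hwa).symm.trans (sameCycle_of_mem (r.trans hwa hab))

theorem setOf_isStandardAt_eq_image [DecidableEq α] (hγ : ∀ a b, b ∈ side S a → γ.SameCycle a b)
    (hσ : IsSideStandard γ S σ) (hr : OnlyCrossingClass (Equiv.Perm.SameCycle.setoid σ) S w)
    (huv : IsCrossingPair σ S u v) :
    {τ | IsStandardAt γ S w τ ∧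
        Equiv.Perm.SameCycle.setoid τ = Equiv.Perm.SameCycle.setoid σ} =
      (fun z : α × α => σ * Equiv.swap u v * Equiv.swap z.1 z.2) ''
        (({z | σ.SameCycle w z} ∩ S) ×ˢ ({z | σ.SameCycle w z} ∩ Sᶜ)) := by
  have hG b : (σ * Equiv.swap u v) b =
      induced γ (cell (Equiv.Perm.SameCycle.setoid σ) S b) b := huv.induced_side ▸ hσ b
  have hGside b : (σ * Equiv.swap u v) b ∈ side S b :=
    huv.induced_side ▸ induced_mem mem_side_self
  ext τ
  constructor
  · rintro ⟨⟨hτ, u', v', hu', hv', huv'⟩, hτσ⟩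
    have hmem z : τ.SameCycle w z ↔ σ.SameCycle w z := Setoid.ext_iff.1 hτσ w z
    refine ⟨(u', v'), ⟨⟨(hmem u').1 hu', huv'.left_mem⟩, (hmem v').1 hv', huv'.right_notMem⟩,
      Equiv.ext fun b => ?_⟩
    have hsame : (σ * Equiv.swap u v) (Equiv.swap u' v' b) =
        (τ * Equiv.swap u' v') (Equiv.swap u' v' b) := by
      rw [hG, ← hτσ, ← hτ, huv'.induced_side]
    simpa using hsame
  · rintro ⟨⟨u', v'⟩, ⟨⟨hu', hu'S⟩, hv', hv'S⟩, rfl⟩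
    have hsetoid := setoid_mul_swap_eq hγ hG hr hu' hv' hu'S hv'S
    have hrel z := Setoid.ext_iff.1 hsetoid w z
    refine ⟨⟨fun b => ?_, u', v', (hrel u').2 hu', (hrel v').2 hv',
      isCrossingPair_mul_swap hGside hu'S hv'S⟩, hsetoid⟩
    rw [induced_side_mul_swap hGside hu'S hv'S, hG, hsetoid]

theorem ncard_setOf_isStandardAt (hγ : ∀ a b, b ∈ side S a → γ.SameCycle a b)
    (hσ : IsStandardAt γ S w σ) (hr : OnlyCrossingClass (Equiv.Perm.SameCycle.setoid σ) S w) :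
    {τ | IsStandardAt γ S w τ ∧
        Equiv.Perm.SameCycle.setoid τ = Equiv.Perm.SameCycle.setoid σ}.ncard =
      ({z | σ.SameCycle w z} ∩ S).ncard * ({z | σ.SameCycle w z} ∩ Sᶜ).ncard := by
  classical
  obtain ⟨hσγ, u, v, -, -, huv⟩ := hσ
  have hinj : Set.InjOn (fun z : α × α => σ * Equiv.swap u v * Equiv.swap z.1 z.2)
      (({z | σ.SameCycle w z} ∩ S) ×ˢ ({z | σ.SameCycle w z} ∩ Sᶜ)) :=
    (mul_right_injective _).injOn.comp
      (injOn_swap.mono (Set.prod_mono Set.inter_subset_right Set.inter_subset_right))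
      (Set.mapsTo_univ _ _)
  rw [setOf_isStandardAt_eq_image hγ hσγ hr huv, hinj.ncard_image, Set.ncard_prod]

end Sides

section Annulus

variable {p q : ℕ} {τ σ : Equiv.Perm (Fin (p + q))} {T : Set (Fin (p + q))}
  {a b c d w x y : Fin (p + q)}

/-- The external points `1, …, p` in increasing order, so that `γ_ext` is the cycle
`(extList p q).formPerm`. -/
def extList (p q : ℕ) : List (Fin (p + q)) := (List.finRange (p + q)).take p

/-- The internal points `p + 1, …, p + q` in increasing order, so that `γ_int` is the cycle
`(intList p q).formPerm`. -/
def intList (p q : ℕ) : List (Fin (p + q)) := (List.finRange (p + q)).drop p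

theorem nodup_extList_append_intList : (extList p q ++ intList p q).Nodup := by
  rw [extList, intList, List.take_append_drop]
  exact List.nodup_finRange _

theorem nodup_extList : (extList p q).Nodup := nodup_extList_append_intList.of_append_left

theorem nodup_intList : (intList p q).Nodup := nodup_extList_append_intList.of_append_right

theorem disjoint_extList_intList : (extList p q).Disjoint (intList p q) :=
  List.disjoint_of_nodup_append nodup_extList_append_intList

theorem setOf_mem_extList : {z | z ∈ extList p q} = extSet p q := by
  ext z
  simp only [extList, extSet, Set.mem_ofPred_eq, List.mem_take_iff_getElem, List.getElem_finRange]
  exact ⟨by rintro ⟨i, hi, rfl⟩; simp at hi ⊢; omega, fun hz => ⟨z, by simp; omega, by simp⟩⟩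

theorem setOf_mem_intList : {z | z ∈ intList p q} = intSet p q := by
  ext z
  simp only [intList, intSet, Set.mem_ofPred_eq, List.mem_drop_iff_getElem, List.getElem_finRange]
  exact ⟨by rintro ⟨i, hi, rfl⟩; simp, fun hz => ⟨z - p, by simp; omega, by ext; simp; omega⟩⟩

theorem notMem_extSet_iff : a ∉ extSet p q ↔ a ∈ intSet p q := by simp [extSet, intSet]

theorem compl_extSet : (extSet p q)ᶜ = intSet p q := Set.ext fun _ => notMem_extSet_iff

theorem mem_extList_iff : a ∈ extList p q ↔ a ∈ extSet p q := Set.ext_iff.1 setOf_mem_extList a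

theorem mem_intList_iff : a ∈ intList p q ↔ a ∈ intSet p q := Set.ext_iff.1 setOf_mem_intList a

theorem induced_gammaAnn_of_subset_extSet (hT : T ⊆ extSet p q) (ha : a ∈ T) :
    induced (gammaAnn p q) T a = induced (gammaExt p q) T a :=
  induced_formPerm_mul_left disjoint_extList_intList (setOf_mem_extList ▸ hT) ha

theorem induced_gammaAnn_of_subset_intSet (hT : T ⊆ intSet p q) (ha : a ∈ T) :
    induced (gammaAnn p q) T a = induced (gammaInt p q) T a :=
  induced_formPerm_mul_right disjoint_extList_intList (setOf_mem_intList ▸ hT) ha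

theorem sameCycle_gammaAnn (h : b ∈ side (extSet p q) a) : (gammaAnn p q).SameCycle a b := by
  by_cases ha : a ∈ extSet p q
  · exact sameCycle_formPerm_mul_left disjoint_extList_intList nodup_extList
      (mem_extList_iff.2 ha) (mem_extList_iff.2 (h.2 ha))
  · exact sameCycle_formPerm_mul_right disjoint_extList_intList nodup_intList
      (mem_intList_iff.2 (notMem_extSet_iff.1 ha))
      (mem_intList_iff.2 (notMem_extSet_iff.1 (mt h.1 ha)))

theorem lamPerm_eq_formPerm :
    lamPerm p q x y = (cutAt (extList p q) x ++ cutAt (intList p q) y).formPerm := by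
  have hext : (extList p q).length = p := by simp [extList]
  have hint : (intList p q).length = q := by simp [intList]
  rw [cutAt, cutAt, hext, hint]
  rfl

theorem induced_lamPerm_of_subset_side (hx : x ∈ extSet p q) (hy : y ∈ intSet p q) (hxT : x ∉ T)
    (hyT : y ∉ T) (hT : T ⊆ side (extSet p q) a) (hb : b ∈ T) :
    induced (lamPerm p q x y) T b = induced (gammaAnn p q) T b := by
  rw [← mem_extList_iff] at hx
  rw [← mem_intList_iff] at hy
  have hnodup := nodup_cutAt_append nodup_extList_append_intList hx hy
  rw [lamPerm_eq_formPerm]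
  by_cases haS : a ∈ extSet p q
  · rw [side_eq_of_mem haS] at hT
    rw [induced_gammaAnn_of_subset_extSet hT hb]
    exact induced_formPerm_cutAt_append hnodup nodup_extList hx (setOf_mem_extList ▸ hT) hxT hb
  · rw [side_eq_compl_of_notMem haS, compl_extSet] at hT
    rw [induced_gammaAnn_of_subset_intSet hT hb]
    exact induced_formPerm_append_cutAt hnodup nodup_intList hy (setOf_mem_intList ▸ hT) hyT hb

/-- The cycle `λ_{x,y}` leaves the external circle only at its last point there, so it enters the
internal points of `T` only once. -/
theorem induced_lamPerm_eq_of_notMem_extSet (hx : x ∈ extSet p q) (hy : y ∈ intSet p q)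
    (hxT : x ∉ T) (ha : a ∈ T ∩ extSet p q) (hc : c ∈ T ∩ extSet p q)
    (ha' : induced (lamPerm p q x y) T a ∉ extSet p q)
    (hc' : induced (lamPerm p q x y) T c ∉ extSet p q) :
    induced (lamPerm p q x y) T a = induced (lamPerm p q x y) T c := by
  have hmem {z} : z ∈ cutAt (extList p q) x ↔ z ∈ extSet p q ∧ z ≠ x := by
    rw [mem_cutAt nodup_extList (mem_extList_iff.2 hx), mem_extList_iff]
  rw [lamPerm_eq_formPerm] at ha' hc' ⊢
  exact induced_formPerm_append_eq_of_notMem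
    (nodup_cutAt_append nodup_extList_append_intList (mem_extList_iff.2 hx) (mem_intList_iff.2 hy))
    ha.1 hc.1 (hmem.2 ⟨ha.2, ne_of_mem_of_not_mem ha.1 hxT⟩)
    (hmem.2 ⟨hc.2, ne_of_mem_of_not_mem hc.1 hxT⟩) (mt (fun h => (hmem.1 h).1) ha')
    (mt (fun h => (hmem.1 h).1) hc')

theorem onlyCrossingClass_of_forall_isOrbit
    (h : ∀ A, IsOrbit τ A → ConnectingBlock p q A → A = {b | τ.SameCycle w b}) :
    OnlyCrossingClass (Equiv.Perm.SameCycle.setoid τ) (extSet p q) w := by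
  intro a b hab hb
  have hconn : ConnectingBlock p q {z | τ.SameCycle a z} := by
    by_cases ha : a ∈ extSet p q
    · exact ⟨⟨a, .refl τ a, ha⟩, b, hab, notMem_extSet_iff.1 ((notMem_side_iff ha).1 hb)⟩
    · exact ⟨⟨b, hab, (notMem_side_iff_mem ha).1 hb⟩, a, .refl τ a, notMem_extSet_iff.1 ha⟩
  exact Set.ext_iff.1 (h _ ⟨a, rfl⟩ hconn) a |>.1 (.refl τ a)

theorem forall_isOrbit_induced_iff_isSideStandard :
    (∀ A, IsOrbit τ A →
      (∀ b ∈ A ∩ extSet p q,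
        induced τ (A ∩ extSet p q) b = induced (gammaExt p q) (A ∩ extSet p q) b) ∧
      (∀ b ∈ A ∩ intSet p q,
        induced τ (A ∩ intSet p q) b = induced (gammaInt p q) (A ∩ intSet p q) b)) ↔
    IsSideStandard (gammaAnn p q) (extSet p q) τ := by
  have cell_ext {a b} (hb : b ∈ extSet p q) (hab : τ.SameCycle a b) := cell_eq_inter hb
    (r := Equiv.Perm.SameCycle.setoid τ) hab
  have cell_int {a b} (hb : b ∈ intSet p q) (hab : τ.SameCycle a b) :=
    compl_extSet (p := p) (q := q) ▸ cell_eq_inter_compl (notMem_extSet_iff.2 hb)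
      (r := Equiv.Perm.SameCycle.setoid τ) hab
  simp only [IsSideStandard, ← induced_cell_eq_induced_side]
  constructor
  · intro h b
    obtain ⟨hext, hint⟩ := h _ ⟨b, rfl⟩
    by_cases hb : b ∈ extSet p q
    · rw [cell_ext hb (.refl τ b), induced_gammaAnn_of_subset_extSet Set.inter_subset_right
        ⟨.refl τ b, hb⟩]
      exact hext b ⟨.refl τ b, hb⟩
    · rw [notMem_extSet_iff] at hb
      rw [cell_int hb (.refl τ b), induced_gammaAnn_of_subset_intSet Set.inter_subset_right
        ⟨.refl τ b, hb⟩]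
      exact hint b ⟨.refl τ b, hb⟩
  · rintro h _ ⟨a, rfl⟩
    refine ⟨fun b hb => ?_, fun b hb => ?_⟩
    · rw [← induced_gammaAnn_of_subset_extSet Set.inter_subset_right hb]
      exact cell_ext hb.2 hb.1 ▸ h b
    · rw [← induced_gammaAnn_of_subset_intSet Set.inter_subset_right hb]
      exact cell_int hb.2 hb.1 ▸ h b

theorem forall_isOrbit_existsUnique_iff_isCrossingPair
    (hr : OnlyCrossingClass (Equiv.Perm.SameCycle.setoid τ) (extSet p q) w)
    (hw : ConnectingBlock p q {z | τ.SameCycle w z}) :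
    (∀ A, IsOrbit τ A → (A ∩ extSet p q).Nonempty → (A ∩ intSet p q).Nonempty →
      (∃! a, a ∈ A ∩ extSet p q ∧ τ a ∈ intSet p q) ∧
      (∃! a, a ∈ A ∩ intSet p q ∧ τ a ∈ extSet p q)) ↔
    ∃ u v, τ.SameCycle w u ∧ τ.SameCycle w v ∧ IsCrossingPair τ (extSet p q) u v := by
  simp only [← compl_extSet (p := p) (q := q), Set.mem_inter_iff,
    Set.mem_compl_iff]
  constructor
  · intro h
    obtain ⟨⟨u, ⟨⟨hwu, hu⟩, hτu⟩, hu_unique⟩, v, ⟨⟨hwv, hv⟩, hτv⟩, hv_unique⟩ :=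
      h _ ⟨w, rfl⟩ hw.1 (compl_extSet ▸ hw.2)
    refine ⟨u, v, hwu, hwv, hu, hv, fun z => ⟨fun hz => ?_, ?_⟩⟩
    · have hwz : τ.SameCycle w z := hr (Equiv.Perm.SameCycle.refl τ z).apply_right hz
      by_cases hzS : z ∈ extSet p q
      · exact .inl (hu_unique z ⟨⟨hwz, hzS⟩, (notMem_side_iff hzS).1 hz⟩)
      · exact .inr (hv_unique z ⟨⟨hwz, hzS⟩, (notMem_side_iff_mem hzS).1 hz⟩)
    · rintro (rfl | rfl)
      exacts [(notMem_side_iff hu).2 hτu, (notMem_side_iff_mem hv).2 hτv]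
  · rintro ⟨u, v, hwu, hwv, hu, hv, huv⟩ _ ⟨a, rfl⟩ ⟨e, hae, he⟩ ⟨i, hai, hi⟩
    have hwa : τ.SameCycle w a :=
      (hr (hae.symm.trans hai) ((notMem_side_iff he).2 hi)).trans hae.symm
    have hτu : τ u ∉ extSet p q := (notMem_side_iff hu).1 ((huv u).2 (.inl rfl))
    have hτv : τ v ∈ extSet p q := (notMem_side_iff_mem hv).1 ((huv v).2 (.inr rfl))
    refine ⟨⟨u, ⟨⟨hwa.symm.trans hwu, hu⟩, hτu⟩, ?_⟩, v, ⟨⟨hwa.symm.trans hwv, hv⟩, hτv⟩, ?_⟩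
    · rintro z ⟨⟨-, hz⟩, hτz⟩
      exact ((huv z).1 ((notMem_side_iff hz).2 hτz)).resolve_right fun h => hv (h ▸ hz)
    · rintro z ⟨⟨-, hz⟩, hτz⟩
      exact ((huv z).1 ((notMem_side_iff_mem hz).2 hτz)).resolve_left fun h => hz (h ▸ hu)

theorem annStandard_iff_isStandardAt
    (hr : OnlyCrossingClass (Equiv.Perm.SameCycle.setoid τ) (extSet p q) w)
    (hw : ConnectingBlock p q {z | τ.SameCycle w z}) :
    AnnStandard p q τ ↔ IsStandardAt (gammaAnn p q) (extSet p q) w τ :=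
  and_congr forall_isOrbit_induced_iff_isSideStandard
    (forall_isOrbit_existsUnique_iff_isCrossingPair hr hw)

theorem AC1.of_setoid_eq (h : AC1 p q σ)
    (hτσ : Equiv.Perm.SameCycle.setoid τ = Equiv.Perm.SameCycle.setoid σ) : AC1 p q τ := by
  have hrel a b : τ.SameCycle a b ↔ σ.SameCycle a b := Setoid.ext_iff.1 hτσ a b
  obtain ⟨a, b, c, d, hne, hγ, hσ⟩ := h
  refine ⟨a, b, c, d, hne, hγ, ?_⟩
  rw [mapsSwap2_iff hne] at hσ ⊢
  rwa [hrel, hrel, hrel]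

/-- Since the orbit of `a, b, c` is not that of `x, y`, it lies on one circle, on which `τ` follows
the order of `γ`, hence of `λ_{x,y}`. -/
theorem not_ac2 (hτ : IsSideStandard (gammaAnn p q) (extSet p q) τ)
    (hr : OnlyCrossingClass (Equiv.Perm.SameCycle.setoid τ) (extSet p q) w) : ¬AC2 p q τ := by
  rintro ⟨a, b, c, x, y, hne, hx, hy, ⟨hlam, -, -⟩, ⟨hac, -, hba⟩, hswap⟩
  obtain ⟨hxy, hx_only⟩ := (mapsSwap_iff (by simp) (by simp) (by grind)).1 hswap
  have hab : τ.SameCycle a b :=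
    (hba ▸ sameCycle_induced (τ := τ) (C := {a, b, c, x, y}) (b := b) (by simp)).symm
  have hac' : τ.SameCycle a c := hac ▸ sameCycle_induced (by simp)
  have hxa : ¬τ.SameCycle x a := fun h => by grind [hx_only a (by simp) h]
  have hyx : y ∉ side (extSet p q) x := (notMem_side_iff hx).2 (notMem_extSet_iff.2 hy)
  have hT : {a, b, c} ⊆ cell (Equiv.Perm.SameCycle.setoid τ) (extSet p q) a := by
    rintro _ (rfl | rfl | rfl)
    exacts [mem_cell_self, ⟨hab, hr.mem_side hxy hyx hxa hab⟩, ⟨hac', hr.mem_side hxy hyx hxa hac'⟩]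
  have hbc : b = c := calc
    b = induced (lamPerm p q x y) {a, b, c} a := hlam.symm
    _ = induced (gammaAnn p q) {a, b, c} a := induced_lamPerm_of_subset_side hx hy (by grind)
      (by grind) (hT.trans Set.inter_subset_right) (by simp)
    _ = induced τ {a, b, c} a := (hτ.induced_eq hT (by simp)).symm
    _ = induced τ {a, b, c, x, y} a := induced_eq_of_subset (by grind) (by simp) (by simp [hac])
    _ = c := hac
  grind

/-- If `a, c` were on one circle and `b, d` on the other, then the cycle `λ_{x,y}`, running through
`a, b, c, d` in this order, would change circle more than twice. -/
theorem mapsCyc4_gammaAnn_of_lamPerm (hne : [a, b, c, d, x, y].Pairwise (· ≠ ·))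
    (hx : x ∈ extSet p q) (hy : y ∈ intSet p q) (hca : c ∈ side (extSet p q) a)
    (hdb : d ∈ side (extSet p q) b) (h : MapsCyc4 (lamPerm p q x y) {a, b, c, d} a b c d) :
    MapsCyc4 (gammaAnn p q) {a, b, c, d} a b c d := by
  have hxT : x ∉ ({a, b, c, d} : Set (Fin (p + q))) := by grind
  have hyT : y ∉ ({a, b, c, d} : Set (Fin (p + q))) := by grind
  by_cases hba : b ∈ side (extSet p q) a
  · have hT : {a, b, c, d} ⊆ side (extSet p q) a := by
      rintro _ (rfl | rfl | rfl | rfl)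
      exacts [mem_side_self, hba, hca, hdb.trans hba]
    have hγ {z} (hz : z ∈ ({a, b, c, d} : Set (Fin (p + q)))) :
        induced (gammaAnn p q) {a, b, c, d} z = induced (lamPerm p q x y) {a, b, c, d} z :=
      (induced_lamPerm_of_subset_side hx hy hxT hyT hT hz).symm
    rwa [MapsCyc4, hγ (by simp), hγ (by simp), hγ (by simp), hγ (by simp)]
  · exfalso
    obtain ⟨hab, hbc, hcd, hda⟩ := h
    by_cases ha : a ∈ extSet p q
    · have hb : b ∉ extSet p q := (notMem_side_iff ha).1 hba
      have hbd := induced_lamPerm_eq_of_notMem_extSet hx hy hxT ⟨by simp, ha⟩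
        ⟨by simp, hca.2 ha⟩ (by rwa [hab]) (by rw [hcd]; exact mt hdb.1 hb)
      grind
    · have hb : b ∈ extSet p q := (notMem_side_iff_mem ha).1 hba
      have hca' := induced_lamPerm_eq_of_notMem_extSet hx hy hxT ⟨by simp, hb⟩
        ⟨by simp, hdb.2 hb⟩ (by rw [hbc]; exact mt hca.1 ha) (by rwa [hda])
      grind

theorem AC3.ac1 (hr : OnlyCrossingClass (Equiv.Perm.SameCycle.setoid τ) (extSet p q) w)
    (h : AC3 p q τ) : AC1 p q τ := by
  obtain ⟨a, b, c, d, x, y, hne, hx, hy, hlam, hτ, hswap⟩ := h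
  obtain ⟨hxy, hx_only⟩ := (mapsSwap_iff (by simp) (by simp) (by grind)).1 hswap
  rw [mapsSwap2_iff_mapsSwap, mapsSwap_iff (by simp) (by simp) (by grind),
    mapsSwap_iff (by simp) (by simp) (by grind)] at hτ
  obtain ⟨⟨hac, ha_only⟩, hbd, -⟩ := hτ
  have hab : ¬τ.SameCycle a b := fun h => by grind [ha_only b (by simp) h]
  have hxa : ¬τ.SameCycle x a := fun h => by grind [hx_only a (by simp) h]
  have hxb : ¬τ.SameCycle x b := fun h => by grind [hx_only b (by simp) h]
  have hyx : y ∉ side (extSet p q) x := (notMem_side_iff hx).2 (notMem_extSet_iff.2 hy)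
  have hne' : [a, b, c, d].Pairwise (· ≠ ·) := by grind
  exact ⟨a, b, c, d, hne', mapsCyc4_gammaAnn_of_lamPerm hne hx hy
    (hr.mem_side hxy hyx hxa hac) (hr.mem_side hxy hyx hxb hbd) hlam,
    (mapsSwap2_iff hne').2 ⟨hac, hbd, hab⟩⟩

theorem AnnNC.annNC_iff_annStandard (hσ : AnnNC p q σ)
    (hr : OnlyCrossingClass (Equiv.Perm.SameCycle.setoid σ) (extSet p q) w)
    (hτσ : Equiv.Perm.SameCycle.setoid τ = Equiv.Perm.SameCycle.setoid σ) :
    AnnNC p q τ ↔ AnnStandard p q τ := by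
  have hnotAC1 : ¬AC1 p q τ := fun h => hσ.2.1 (h.of_setoid_eq hτσ.symm)
  rw [← hτσ] at hr
  exact ⟨fun h => h.1, fun h => ⟨h, hnotAC1,
    not_ac2 (forall_isOrbit_induced_iff_isSideStandard.1 h.1) hr, fun h3 => hnotAC1 (h3.ac1 hr)⟩⟩

theorem ncard_setOf_annStandard (hσ : AnnStandard p q σ)
    (hr : OnlyCrossingClass (Equiv.Perm.SameCycle.setoid σ) (extSet p q) w)
    (hw : ConnectingBlock p q {z | σ.SameCycle w z}) :
    {τ | AnnStandard p q τ ∧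
        Equiv.Perm.SameCycle.setoid τ = Equiv.Perm.SameCycle.setoid σ}.ncard =
      ({z | σ.SameCycle w z} ∩ extSet p q).ncard * ({z | σ.SameCycle w z} ∩ intSet p q).ncard := by
  have hstandard {τ : Equiv.Perm (Fin (p + q))}
      (hτσ : Equiv.Perm.SameCycle.setoid τ = Equiv.Perm.SameCycle.setoid σ) :
      AnnStandard p q τ ↔ IsStandardAt (gammaAnn p q) (extSet p q) w τ := by
    refine annStandard_iff_isStandardAt (hτσ ▸ hr) ?_
    rwa [show {z | τ.SameCycle w z} = {z | σ.SameCycle w z} from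
      Set.ext (Setoid.ext_iff.1 hτσ w)]
  rw [← compl_extSet, ← ncard_setOf_isStandardAt (fun _ _ => sameCycle_gammaAnn)
    ((hstandard rfl).1 hσ) hr]
  exact congrArg Set.ncard (Set.ext fun τ => and_congr_left hstandard)

end Annulus

/-- Proposition 4.6 3°: let `π ∈ NC_ann(p,q)` be a partition of `[p+q]` with exactly one
`(p,q)`-connecting block `B₀`.  Then every permutation of `[p+q]` which is standard in
`(p,q)`-annular sense and has orbit partition `π` belongs to `S_ann-nc(p,q)`;
consequently there are exactly `card(B₀ ∩ {1,…,p}) · card(B₀ ∩ {p+1,…,p+q})`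
permutations `τ ∈ S_ann-nc(p,q)` with orbit partition `π`. -/
theorem stmt_10 (p q : ℕ) (hp : 0 < p) (hq : 0 < q) (π : Set (Set (Fin (p + q))))
    (hpart : Setoid.IsPartition π) (B₀ : Set (Fin (p + q))) (hB₀ : B₀ ∈ π)
    (hconn : ConnectingBlock p q B₀)
    (huniq : ∀ B ∈ π, ConnectingBlock p q B → B = B₀)
    (hNC : ∃ σ : Equiv.Perm (Fin (p + q)), AnnNC p q σ ∧ {A | IsOrbit σ A} = π) :
    (∀ τ : Equiv.Perm (Fin (p + q)),
        AnnStandard p q τ → {A | IsOrbit τ A} = π → AnnNC p q τ) ∧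
    Set.ncard {τ : Equiv.Perm (Fin (p + q)) | AnnNC p q τ ∧ {A | IsOrbit τ A} = π} =
      (B₀ ∩ extSet p q).ncard * (B₀ ∩ intSet p q).ncard := by
  obtain ⟨σ, hσ, rfl⟩ := hNC
  obtain ⟨w, rfl⟩ := hB₀
  have hr : OnlyCrossingClass (Equiv.Perm.SameCycle.setoid σ) (extSet p q) w :=
    onlyCrossingClass_of_forall_isOrbit huniq
  simp only [setOf_isOrbit_inj]
  refine ⟨fun τ hτ hτσ => (hσ.annNC_iff_annStandard hr hτσ).2 hτ, ?_⟩
  rw [← ncard_setOf_annStandard hσ.1 hr hconn]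
  exact congrArg Set.ncard (Set.ext fun τ => and_congr_left (hσ.annNC_iff_annStandard hr))
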